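/- arXiv:1901.06118 — 4 statements merged into one kernel-verified Lean document; each statement's English description precedes it below -/
import Mathlib

section
/- Let α ∈ (0,1), let H be a complex Hilbert space and J a densely defined linear operator in H. Assume: (i) for each λ > 0 there is a bounded linear operator R_λ on H with ‖R_λ‖ ≤ 1/λ such that R_λ(J f + λ f) = f for every f ∈ D(J), and for every g ∈ H one has R_λ g ∈ D(J) with J(R_λ g) + λ R_λ g = g; (ii) there is a bounded linear operator B on H with ‖B‖ = b such that B(J f) = f for every f ∈ D(J), and for every g ∈ H one has B g ∈ D(J) with J(B g) = g. Then for every f ∈ H the function λ ↦ λ^{-α} R_λ f is Bochner integrable on (0, ∞) and ‖(sin(απ)/π) ∫₀^∞ λ^{-α} R_λ f dλ‖ ≤ (2(1-α)^{-1} b + α^{-1})·‖f‖. -/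
open MeasureTheory Real Set

/-- If `J` is a densely defined m-accretive operator (with resolvents `R λ`
satisfying `‖R λ‖ ≤ 1/λ`) having a bounded inverse `B` with `‖B‖ = b`, then for
`α ∈ (0,1)` the Balakrishnan integral defining `J^{-α}` converges (Bochner) on `(0,∞)`
for each `f`, and its value is bounded by `(2(1-α)⁻¹ b + α⁻¹)‖f‖`. -/
theorem fractional_negative_power_bounded
    {H : Type*} [NormedAddCommGroup H] [InnerProductSpace ℂ H] [CompleteSpace H]
    (α : ℝ) (hα : α ∈ Set.Ioo (0 : ℝ) 1)
    (J : H →ₗ.[ℂ] H) (hdense : Dense (J.domain : Set H))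
    (R : ℝ → H →L[ℂ] H)
    (hRnorm : ∀ lam : ℝ, 0 < lam → ‖R lam‖ ≤ 1 / lam)
    (hRleft : ∀ lam : ℝ, 0 < lam → ∀ f : J.domain,
      R lam (J f + (lam : ℂ) • (f : H)) = f)
    (hRright : ∀ lam : ℝ, 0 < lam → ∀ g : H,
      ∃ hg : R lam g ∈ J.domain, J ⟨R lam g, hg⟩ + (lam : ℂ) • R lam g = g)
    (B : H →L[ℂ] H) (b : ℝ) (hb : ‖B‖ = b)
    (hBleft : ∀ f : J.domain, B (J f) = f)
    (hBright : ∀ g : H, ∃ hg : B g ∈ J.domain, J ⟨B g, hg⟩ = g) :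
    ∀ f : H,
      IntegrableOn (fun lam : ℝ => lam ^ (-α) • R lam f) (Ioi (0 : ℝ)) volume ∧
      ‖(Real.sin (α * π) / π) • ∫ lam in Ioi (0 : ℝ), lam ^ (-α) • R lam f‖ ≤
        (2 * (1 - α)⁻¹ * b + α⁻¹) * ‖f‖ := by
  intro f
  obtain ⟨h0, h1⟩ := hα
  have hb0 : 0 ≤ b := hb ▸ norm_nonneg B
  have hR1 : ∀ lam : ℝ, 0 < lam → ∀ g : H, ‖R lam g‖ ≤ 1 / lam * ‖g‖ := fun lam hl g =>
    (R lam).le_of_opNorm_le (hRnorm lam hl) g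
  have hR2 : ∀ lam : ℝ, 0 < lam → ∀ g : H, ‖R lam g‖ ≤ 2 * b * ‖g‖ := by
    intro lam hl g
    obtain ⟨hg, e⟩ := hRright lam hl g
    have e1 : J ⟨R lam g, hg⟩ = g - (lam : ℂ) • R lam g := eq_sub_of_add_eq e
    have e2 : B (g - (lam : ℂ) • R lam g) = R lam g := by rw [← e1]; exact hBleft _
    have e3 : ‖(lam : ℂ) • R lam g‖ ≤ ‖g‖ := by
      rw [norm_smul, Complex.norm_real, Real.norm_of_nonneg hl.le]
      calc lam * ‖R lam g‖ ≤ lam * (1 / lam * ‖g‖) :=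
            mul_le_mul_of_nonneg_left (hR1 lam hl g) hl.le
        _ = ‖g‖ := by field_simp
    calc ‖R lam g‖ = ‖B (g - (lam : ℂ) • R lam g)‖ := by rw [e2]
      _ ≤ b * ‖g - (lam : ℂ) • R lam g‖ := B.le_of_opNorm_le hb.le _
      _ ≤ b * (‖g‖ + ‖g‖) := by
          refine mul_le_mul_of_nonneg_left ?_ hb0
          exact (norm_sub_le _ _).trans (by linarith)
      _ = 2 * b * ‖g‖ := by ring
  have hres : ∀ mu : ℝ, 0 < mu → ∀ lam : ℝ, 0 < lam →
      R mu f - R lam f = ((lam : ℂ) - mu) • R mu (R lam f) := by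
    intro mu hm lam hl
    obtain ⟨hg, e⟩ := hRright lam hl f
    have e1 := hRleft mu hm ⟨R lam f, hg⟩
    have e2 : J ⟨R lam f, hg⟩ = f - (lam : ℂ) • R lam f := eq_sub_of_add_eq e
    rw [e2] at e1
    simp only [map_add, map_sub, map_smul] at e1
    rw [sub_smul]
    calc R mu f - R lam f = R mu f - (R mu f - (lam : ℂ) • R mu (R lam f)
          + (mu : ℂ) • R mu (R lam f)) := by rw [e1]
      _ = _ := by abel
  have hcont : ContinuousOn (fun lam : ℝ => R lam f) (Ioi 0) := by
    have : LipschitzOnWith (Real.toNNReal (2 * b * (2 * b * ‖f‖))) (fun lam : ℝ => R lam f)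
        (Ioi 0) := by
      refine LipschitzOnWith.of_dist_le_mul ?_
      intro mu hm lam hl
      rw [Real.coe_toNNReal _ (by positivity), dist_eq_norm, hres mu hm lam hl, norm_smul,
        ← Complex.ofReal_sub, Complex.norm_real, dist_comm, dist_eq_norm, mul_comm]
      refine mul_le_mul_of_nonneg_right ?_ (norm_nonneg _)
      refine (hR2 mu hm _).trans ?_
      exact mul_le_mul_of_nonneg_left (hR2 lam hl f) (by positivity)
    exact this.continuousOn
  have hFc : ContinuousOn (fun lam : ℝ => lam ^ (-α) • R lam f) (Ioi 0) := by
    have hp : ContinuousOn (fun lam : ℝ => lam ^ (-α)) (Ioi 0) := by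
      intro x hx
      exact (Real.continuousAt_rpow_const x _ (Or.inl (ne_of_gt hx))).continuousWithinAt
    exact hp.smul hcont
  have hms := hFc.aestronglyMeasurable (μ := volume) measurableSet_Ioi
  have g1 : IntegrableOn (fun lam : ℝ => lam ^ (-α) * (2 * b * ‖f‖)) (Ioc 0 1) volume := by
    refine Integrable.mul_const ?_ _
    have := intervalIntegral.intervalIntegrable_rpow' (a := 0) (b := 1) (r := -α) (by linarith)
    rwa [intervalIntegrable_iff_integrableOn_Ioc_of_le zero_le_one] at this
  have g2 : IntegrableOn (fun lam : ℝ => lam ^ (-α - 1) * ‖f‖) (Ioi 1) volume := by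
    refine Integrable.mul_const ?_ _
    exact integrableOn_Ioi_rpow_of_lt (by linarith) one_pos
  have b1 : ∀ᵐ lam ∂(volume.restrict (Ioc (0:ℝ) 1)),
      ‖lam ^ (-α) • R lam f‖ ≤ lam ^ (-α) * (2 * b * ‖f‖) := by
    refine (ae_restrict_iff' measurableSet_Ioc).2 (Filter.Eventually.of_forall ?_)
    intro x hx
    have hp := Real.rpow_nonneg hx.1.le (-α)
    rw [norm_smul, Real.norm_of_nonneg hp]
    exact mul_le_mul_of_nonneg_left (hR2 x hx.1 f) hp
  have b2 : ∀ᵐ lam ∂(volume.restrict (Ioi (1:ℝ))),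
      ‖lam ^ (-α) • R lam f‖ ≤ lam ^ (-α - 1) * ‖f‖ := by
    refine (ae_restrict_iff' measurableSet_Ioi).2 (Filter.Eventually.of_forall ?_)
    intro x hx
    have hx0 : 0 < x := one_pos.trans hx
    have hp := Real.rpow_nonneg hx0.le (-α)
    rw [norm_smul, Real.norm_of_nonneg hp, Real.rpow_sub_one hx0.ne', div_eq_mul_one_div,
      mul_assoc]
    exact mul_le_mul_of_nonneg_left (hR1 x hx0 f) hp
  have i1 : IntegrableOn (fun lam : ℝ => lam ^ (-α) • R lam f) (Ioc 0 1) volume :=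
    Integrable.mono' g1 (hms.mono_set Ioc_subset_Ioi_self) b1
  have i2 : IntegrableOn (fun lam : ℝ => lam ^ (-α) • R lam f) (Ioi 1) volume :=
    Integrable.mono' g2 (hms.mono_set (Ioi_subset_Ioi zero_le_one)) b2
  have hU : Ioc (0:ℝ) 1 ∪ Ioi 1 = Ioi 0 := Ioc_union_Ioi_eq_Ioi zero_le_one
  refine ⟨hU ▸ i1.union i2, ?_⟩
  have n1 := norm_integral_le_of_norm_le g1 b1
  have n2 := norm_integral_le_of_norm_le g2 b2
  have v1 : ∫ lam in Ioc (0:ℝ) 1, lam ^ (-α) * (2 * b * ‖f‖) = (1 - α)⁻¹ * (2 * b * ‖f‖) := by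
    rw [integral_mul_const, ← intervalIntegral.integral_of_le zero_le_one,
      integral_rpow (Or.inl (by linarith)), Real.one_rpow, Real.zero_rpow (by linarith)]
    rw [sub_zero, one_div, neg_add_eq_sub]
  have v2 : ∫ lam in Ioi (1:ℝ), lam ^ (-α - 1) * ‖f‖ = α⁻¹ * ‖f‖ := by
    rw [integral_mul_const, integral_Ioi_rpow_of_lt (by linarith) one_pos, Real.one_rpow]
    congr 1
    rw [sub_add_cancel, neg_div_neg_eq, one_div]
  have hs : ‖Real.sin (α * π) / π‖ ≤ 1 := by
    rw [norm_div, Real.norm_of_nonneg Real.pi_pos.le, div_le_one Real.pi_pos]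
    exact (Real.abs_sin_le_one _).trans (by linarith [Real.pi_gt_three])
  rw [norm_smul, ← hU, setIntegral_union Ioc_disjoint_Ioi_same measurableSet_Ioi i1 i2]
  refine (mul_le_of_le_one_left (norm_nonneg _) hs).trans ((norm_add_le _ _).trans ?_)
  rw [v1] at n1
  rw [v2] at n2
  calc _ ≤ _ := add_le_add n1 n2
    _ = _ := by ring
end

section
/- Let H be a complex Hilbert space, V ⊆ H a subspace, p : V → ℝ a nonnegative function, W : V → H a linear map, and C₀, C₁, C₂ > 0 constants such that for all f, g ∈ V: ‖f‖ ≤ C₀·p(f), |⟨W f, g⟩| ≤ C₁·p(f)·p(g), and Re⟨W f, f⟩ ≥ C₂·p(f)². Then for every ε ∈ (0,1) and every f ∈ V one has Re⟨W f, f⟩ − (ε C₂ / C₁)·|Im⟨W f, f⟩| ≥ (C₂(1−ε)/C₀²)·‖f‖². In particular the numerical range of W lies in a sector of the form {ζ : |arg(ζ − γ)| ≤ θ < π/2} with vertex γ = C₂(1−ε)/C₀² > 0. -/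
open scoped InnerProductSpace

/-- Under the embedding inequality `‖f‖ ≤ C₀ p(f)` and conditions H2
(`|⟪Wf,g⟫| ≤ C₁ p(f) p(g)`, `Re⟪Wf,f⟫ ≥ C₂ p(f)²`), the numerical range estimate
`Re⟪Wf,f⟫ − (εC₂/C₁)|Im⟪Wf,f⟫| ≥ (C₂(1−ε)/C₀²)‖f‖²` holds for every `ε ∈ (0,1)`. -/
theorem sectorial_estimate
    {H : Type*} [NormedAddCommGroup H] [InnerProductSpace ℂ H] [CompleteSpace H]
    (V : Submodule ℂ H) (p : V → ℝ) (hp : ∀ f : V, 0 ≤ p f)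
    (W : V →ₗ[ℂ] H) (C₀ C₁ C₂ : ℝ) (hC₀ : 0 < C₀) (hC₁ : 0 < C₁) (hC₂ : 0 < C₂)
    (hembed : ∀ f : V, ‖(f : H)‖ ≤ C₀ * p f)
    (hbound : ∀ f g : V, ‖(⟪W f, (g : H)⟫_ℂ)‖ ≤ C₁ * p f * p g)
    (hcoerc : ∀ f : V, C₂ * (p f) ^ 2 ≤ (⟪W f, (f : H)⟫_ℂ).re) :
    ∀ ε : ℝ, ε ∈ Set.Ioo (0 : ℝ) 1 → ∀ f : V,
      (C₂ * (1 - ε) / C₀ ^ 2) * ‖(f : H)‖ ^ 2 ≤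
        (⟪W f, (f : H)⟫_ℂ).re - (ε * C₂ / C₁) * |(⟪W f, (f : H)⟫_ℂ).im| := by
  rintro ε ⟨h0, h1⟩ f
  have him : |(⟪W f, (f : H)⟫_ℂ).im| ≤ C₁ * p f * p f :=
    (Complex.abs_im_le_norm _).trans (hbound f f)
  have hn : ‖(f : H)‖ ^ 2 ≤ (C₀ * p f) ^ 2 :=
    pow_le_pow_left₀ (norm_nonneg _) (hembed f) 2
  have h1' : 0 ≤ 1 - ε := by linarith
  have hA : (C₂ * (1 - ε) / C₀ ^ 2) * ‖(f : H)‖ ^ 2 ≤ C₂ * (1 - ε) * p f ^ 2 := by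
    calc (C₂ * (1 - ε) / C₀ ^ 2) * ‖(f : H)‖ ^ 2
        ≤ (C₂ * (1 - ε) / C₀ ^ 2) * (C₀ * p f) ^ 2 :=
          mul_le_mul_of_nonneg_left hn (by positivity)
      _ = C₂ * (1 - ε) * p f ^ 2 := by field_simp
  have hB : (ε * C₂ / C₁) * |(⟪W f, (f : H)⟫_ℂ).im| ≤ ε * C₂ * p f ^ 2 := by
    calc (ε * C₂ / C₁) * |(⟪W f, (f : H)⟫_ℂ).im|
        ≤ (ε * C₂ / C₁) * (C₁ * p f * p f) :=
          mul_le_mul_of_nonneg_left him (by positivity)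
      _ = ε * C₂ * p f ^ 2 := by field_simp
  have hC := hcoerc f
  linarith
end

section
/- For t > 0 let N_t(x) = (2πt)^{-1/2}·exp(−x²/(2t)). Then for every smooth compactly supported function f : ℝ → ℂ, ‖(N_t ⋆ f − f)/t − (1/2)·f″‖_{L²(ℝ)} → 0 as t → 0⁺. Thus the infinitesimal generator −A of the Gauss–Weierstrass semigroup satisfies A f = −(1/2) f″ for smooth compactly supported f. -/
open MeasureTheory Real Filter Topology

/-- The Gauss–Weierstrass kernel `N_t(x) = (2πt)^{-1/2} exp(−x²/(2t))`. -/
noncomputable def gaussKernel (t x : ℝ) : ℝ :=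
  (Real.sqrt (2 * π * t))⁻¹ * Real.exp (-x ^ 2 / (2 * t))

lemma gsg_step (g g' : ℝ → ℂ) (C : ℝ) (h0 : g 0 = 0)
    (hg : ∀ r, HasDerivAt g (g' r) r)
    (hb : ∀ r ∈ Set.Icc (0:ℝ) 1, ‖g' r‖ ≤ C) : ∀ r ∈ Set.Icc (0:ℝ) 1, ‖g r‖ ≤ C := by
  intro r hr
  have hC : 0 ≤ C := (norm_nonneg _).trans (hb r hr)
  have := (convex_Icc (0:ℝ) 1).norm_image_sub_le_of_norm_hasDerivWithin_le
    (fun y _ => (hg y).hasDerivWithinAt) hb (Set.left_mem_Icc.2 zero_le_one) hr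
  rw [h0, sub_zero, sub_zero, Real.norm_of_nonneg hr.1] at this
  nlinarith [hr.2]

lemma gsg_taylor (f f1 f2 f3 : ℝ → ℂ) (h1 : ∀ x, HasDerivAt f (f1 x) x)
    (h2 : ∀ x, HasDerivAt f1 (f2 x) x) (h3 : ∀ x, HasDerivAt f2 (f3 x) x)
    (C : ℝ) (hC : ∀ x, (1 + x ^ 2) * ‖f3 x‖ ≤ C) (x s : ℝ) :
    ‖f (x - s) - f x + s * f1 x - s ^ 2 / 2 * f2 x‖ ≤
      2 * C * (|s| ^ 3 * (1 + s ^ 2)) * (1 + x ^ 2)⁻¹ := by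
  have hin : ∀ r : ℝ, HasDerivAt (fun r : ℝ => x - r * s) (-s) r := fun r => by
    simpa using ((hasDerivAt_id r).mul_const s).const_sub x
  have hr : ∀ r : ℝ, HasDerivAt (fun r : ℝ => (r : ℂ)) 1 r := fun r =>
    (hasDerivAt_id r).ofReal_comp
  set D := 2 * C * (|s| ^ 3 * (1 + s ^ 2)) * (1 + x ^ 2)⁻¹ with hD
  have b3 : ∀ r ∈ Set.Icc (0:ℝ) 1, ‖(s:ℂ) ^ 2 * ((-s) • f3 (x - r * s))‖ ≤ D := by
    intro r hr
    obtain ⟨hr0, hr1⟩ := hr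
    have hk := hC (x - r * s)
    set y := x - r * s with hy
    have hp : 1 + x ^ 2 ≤ 2 * (1 + y ^ 2) * (1 + s ^ 2) := by
      have hx : x = y + r * s := by rw [hy]; ring
      have h1 : (r * s) ^ 2 ≤ s ^ 2 := by
        rw [mul_pow]; exact mul_le_of_le_one_left (sq_nonneg s) (pow_le_one₀ hr0 hr1)
      rw [hx]
      nlinarith [sq_nonneg (y - r * s), mul_nonneg (sq_nonneg y) (sq_nonneg s)]
    have hn : ‖(s:ℂ) ^ 2 * ((-s) • f3 y)‖ = |s| ^ 3 * ‖f3 y‖ := by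
      rw [norm_mul, norm_pow, norm_smul, Complex.norm_real, norm_neg, Real.norm_eq_abs]; ring
    have hx0 : 0 < 1 + x ^ 2 := by positivity
    rw [hn, hD, ← div_eq_mul_inv, le_div_iff₀ hx0]
    have hs : 0 ≤ |s| ^ 3 := by positivity
    calc |s| ^ 3 * ‖f3 y‖ * (1 + x ^ 2) ≤ |s| ^ 3 * ‖f3 y‖ * (2 * (1 + y ^ 2) * (1 + s ^ 2)) := by
          gcongr
      _ = 2 * ((1 + y ^ 2) * ‖f3 y‖) * (|s| ^ 3 * (1 + s ^ 2)) := by ring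
      _ ≤ _ := by gcongr
  have b2 := gsg_step (fun r => (s:ℂ) ^ 2 * (f2 (x - r * s) - f2 x)) _ D (by simp)
    (fun r => (((h3 _).scomp r (hin r)).sub_const _).const_mul _) b3
  have b1 := gsg_step (fun r => -s * (f1 (x - r * s) - f1 x) - r * (s ^ 2 * f2 x)) 
    (fun r => (s:ℂ) ^ 2 * (f2 (x - r * s) - f2 x)) D (by simp)
    (fun r => by
      refine HasDerivAt.congr_deriv (((((h2 _).scomp r (hin r)).sub_const (f1 x)).const_mul
        (-s:ℂ)).sub ((hr r).mul_const (s ^ 2 * f2 x))) ?_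
      rw [Complex.real_smul]; push_cast; ring) b2
  have b0 := gsg_step (fun r => f (x - r * s) - f x + r * (s * f1 x)
      - r * r * (s ^ 2 / 2 * f2 x)) 
    (fun r => -s * (f1 (x - r * s) - f1 x) - r * (s ^ 2 * f2 x)) D (by simp)
    (fun r => by
      refine HasDerivAt.congr_deriv (((((h1 _).scomp r (hin r)).sub_const (f x)).add
        ((hr r).mul_const (s * f1 x))).sub
        (((hr r).mul (hr r)).mul_const (s ^ 2 / 2 * f2 x))) ?_
      rw [Complex.real_smul]; push_cast; ring) b1
  simpa using b0 1 (by simp)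

open ProbabilityTheory in
lemma gsg_conv (f : ℝ → ℂ) (t : ℝ) (ht : 0 < t) (x : ℝ) :
    (∫ τ : ℝ, (gaussKernel t (x - τ) : ℂ) * f τ) =
      ∫ u, f (x - √t * u) ∂(gaussianReal 0 1) := by
  have hm : gaussianReal 0 (NNReal.mk t ht.le) = (gaussianReal 0 1).map (√t * ·) := by
    rw [gaussianReal_map_const_mul]
    congr 1
    · simp
    · ext; simp [Real.sq_sqrt ht.le]
  have hne : √t ≠ 0 := (Real.sqrt_pos.2 ht).ne'
  have h1 : ∫ u, f (x - √t * u) ∂(gaussianReal 0 1) =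
      ∫ s, f (x - s) ∂(gaussianReal 0 (NNReal.mk t ht.le)) := by
    rw [hm]
    exact ((Homeomorph.mulLeft₀ (√t) hne).measurableEmbedding.integral_map
      (fun s => f (x - s))).symm
  rw [h1, integral_gaussianReal_eq_integral_smul (by
    intro h; exact ht.ne' (congrArg NNReal.toReal h)),
    ← integral_sub_left_eq_self _ volume x]
  congr 1
  ext s
  simp [gaussKernel, gaussianPDFReal]

open ProbabilityTheory in
lemma gsg_bound (f f1 f2 f3 : ℝ → ℂ) (h1 : ∀ x, HasDerivAt f (f1 x) x)
    (h2 : ∀ x, HasDerivAt f1 (f2 x) x) (h3 : ∀ x, HasDerivAt f2 (f3 x) x)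
    (C B : ℝ) (hC : ∀ x, (1 + x ^ 2) * ‖f3 x‖ ≤ C) (hB : ∀ x, ‖f x‖ ≤ B)
    (t : ℝ) (ht : 0 < t) (ht1 : t ≤ 1) (x : ℝ) :
    ‖((∫ τ : ℝ, (gaussKernel t (x - τ) : ℂ) * f τ) - f x) / (t : ℂ) -
              (1 / 2 : ℂ) * f2 x‖ ≤ 
      √t * (2 * C * (∫ u, (|u| ^ 3 * (1 + u ^ 2)) ∂(gaussianReal 0 1))) * (1 + x ^ 2)⁻¹ := by
  rw [gsg_conv f t ht x]
  set γ := gaussianReal 0 1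
  have hpow : ∀ n : ℕ, Integrable (fun u : ℝ => |u| ^ n) γ := fun n => by
    have := (memLp_id_gaussianReal (μ := 0) (v := 1) n).integrable_norm_pow'
    simpa using this
  have hC0 : 0 ≤ C := (by positivity : 0 ≤ (1 + (0:ℝ) ^ 2) * ‖f3 0‖).trans (hC 0)
  have i1 : Integrable (fun u : ℝ => (u : ℂ)) γ := by
    have := (memLp_id_gaussianReal (μ := 0) (v := 1) 1).integrable (by simp)
    exact this.ofReal
  have i2 : Integrable (fun u : ℝ => (u : ℂ) ^ 2) γ := by
    have := (hpow 2).ofReal (𝕜 := ℂ)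
    simpa [← Complex.ofReal_pow] using this
  have e1 : ∫ u : ℝ, (u : ℂ) ∂γ = 0 := by
    have : ∫ u : ℝ, u ∂γ = 0 := integral_id_gaussianReal
    rw [integral_complex_ofReal, this]; simp
  have e2 : ∫ u : ℝ, (u : ℂ) ^ 2 ∂γ = 1 := by
    have h := variance_of_integral_eq_zero (μ := γ) (X := fun u : ℝ => u) aemeasurable_id
      integral_id_gaussianReal
    have h' : Var[fun u : ℝ => u; γ] = 1 := variance_fun_id_gaussianReal (μ := 0) (v := 1)
    rw [h'] at h
    simp_rw [← Complex.ofReal_pow]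
    rw [integral_complex_ofReal, ← h]; simp
  have hcont : Continuous f := continuous_iff_continuousAt.2 fun x => (h1 x).continuousAt
  have i0 : Integrable (fun u : ℝ => f (x - √t * u)) γ :=
    Integrable.of_bound (by fun_prop) B (Eventually.of_forall fun u => hB _)
  have hst : ((√t : ℝ) : ℂ) ^ 2 = t := by
    rw [← Complex.ofReal_pow, Real.sq_sqrt ht.le]
  have htc : (t : ℂ) ≠ 0 := by exact_mod_cast ht.ne'
  have key : (∫ u, f (x - √t * u) ∂γ - f x) / (t : ℂ) - (1 / 2 : ℂ) * f2 x =
      (∫ u, (f (x - √t * u) - f x + ((√t * u : ℝ) : ℂ) * f1 x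
        - ((√t * u : ℝ) : ℂ) ^ 2 / 2 * f2 x) ∂γ) / t := by
    have hre : ∀ u : ℝ, (f (x - √t * u) - f x + ((√t * u : ℝ) : ℂ) * f1 x
        - ((√t * u : ℝ) : ℂ) ^ 2 / 2 * f2 x) = 
        f (x - √t * u) - f x + (u:ℂ) * (√t * f1 x) - (u:ℂ) ^ 2 * (t / 2 * f2 x) := by
      intro u
      push_cast
      rw [← hst]; ring
    simp_rw [hre]
    have j0 : Integrable (fun u : ℝ => f (x - √t * u) - f x) γ := i0.sub (integrable_const _)
    have j1 : Integrable (fun u : ℝ => f (x - √t * u) - f x + (u:ℂ) * (√t * f1 x)) γ :=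
      j0.add (i1.mul_const _)
    rw [integral_sub j1 (i2.mul_const _), integral_add j0 (i1.mul_const _),
      integral_sub i0 (integrable_const _), integral_mul_const, integral_mul_const, e1, e2]
    simp
    field_simp
  rw [key, norm_div, Complex.norm_real, Real.norm_of_nonneg ht.le, div_le_iff₀ ht]
  have iM : Integrable (fun u : ℝ => |u| ^ 3 * (1 + u ^ 2)) γ := by
    have := (hpow 3).add (hpow 5)
    refine this.congr (Eventually.of_forall fun u => ?_)
    simp only [Pi.add_apply]
    rw [← sq_abs u]; ring
  have hle := norm_integral_le_of_norm_le (μ := γ)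
    (f := fun u => (f (x - √t * u) - f x + ((√t * u : ℝ) : ℂ) * f1 x
        - ((√t * u : ℝ) : ℂ) ^ 2 / 2 * f2 x))
    (iM.const_mul (√t * t * (2 * C) * (1 + x ^ 2)⁻¹)) (Eventually.of_forall fun u => by
      refine (gsg_taylor f f1 f2 f3 h1 h2 h3 C hC x (√t * u)).trans ?_
      have ha : |√t * u| ^ 3 = √t * t * |u| ^ 3 := by
        rw [abs_mul, abs_of_nonneg (Real.sqrt_nonneg t), mul_pow]
        congr 1
        rw [pow_succ, Real.sq_sqrt ht.le]; ring
      have hb : 1 + (√t * u) ^ 2 ≤ 1 + u ^ 2 := by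
        rw [mul_pow, Real.sq_sqrt ht.le]; nlinarith [sq_nonneg u]
      rw [ha]
      calc _ ≤ 2 * C * (√t * t * |u| ^ 3 * (1 + u ^ 2)) * (1 + x ^ 2)⁻¹ := by gcongr
        _ = _ := by ring)
  refine hle.trans (le_of_eq ?_)
  rw [integral_const_mul]; ring

lemma gsg_memLp : MemLp (fun x : ℝ => (1 + x ^ 2)⁻¹) 2 volume := by
  have hc : Continuous (fun x : ℝ => (1 + x ^ 2)⁻¹) :=
    Continuous.inv₀ (by fun_prop) (fun x => by positivity)
  rw [memLp_two_iff_integrable_sq hc.aestronglyMeasurable]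
  refine integrable_inv_one_add_sq.mono' (hc.pow 2).aestronglyMeasurable
    (Eventually.of_forall fun x => ?_)
  have h0 : 0 ≤ (1 + x ^ 2)⁻¹ := by positivity
  have h1 : (1 + x ^ 2)⁻¹ ≤ 1 := inv_le_one_of_one_le₀ (by nlinarith [sq_nonneg x])
  rw [Real.norm_of_nonneg (by positivity)]
  nlinarith

/-- For smooth compactly supported `f : ℝ → ℂ`,
`‖(N_t ⋆ f − f)/t − (1/2)f″‖₂ → 0` as `t → 0⁺`; i.e. the generator `−A` of the
Gauss–Weierstrass semigroup satisfies `Af = −(1/2)f″` on such functions. -/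
theorem gauss_semigroup_generator
    (f : ℝ → ℂ) (hsmooth : ContDiff ℝ (⊤ : ℕ∞) f) (hsupp : HasCompactSupport f) :
    Tendsto
      (fun t : ℝ =>
        eLpNorm
          (fun x : ℝ =>
            ((∫ τ : ℝ, (gaussKernel t (x - τ) : ℂ) * f τ) - f x) / (t : ℂ) -
              (1 / 2 : ℂ) * deriv (deriv f) x)
          2 volume)
      (𝓝[>] 0) (𝓝 0) := by
  have c1 := (contDiff_infty_iff_deriv.1 hsmooth).2
  have c2 := (contDiff_infty_iff_deriv.1 c1).2
  have c3 := (contDiff_infty_iff_deriv.1 c2).2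
  have h1 : ∀ x, HasDerivAt f (deriv f x) x := fun x =>
    ((contDiff_infty_iff_deriv.1 hsmooth).1 x).hasDerivAt
  have h2 : ∀ x, HasDerivAt (deriv f) (deriv (deriv f) x) x := fun x =>
    ((contDiff_infty_iff_deriv.1 c1).1 x).hasDerivAt
  have h3 : ∀ x, HasDerivAt (deriv (deriv f)) (deriv (deriv (deriv f)) x) x := fun x =>
    ((contDiff_infty_iff_deriv.1 c2).1 x).hasDerivAt
  obtain ⟨B, hB⟩ := hsupp.exists_bound_of_continuous hsmooth.continuous
  have hs3 : HasCompactSupport (fun x : ℝ => ((1 + x ^ 2 : ℝ) : ℂ) * deriv (deriv (deriv f)) x) :=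
    hsupp.deriv.deriv.deriv.mul_left
  obtain ⟨C, hC⟩ := hs3.exists_bound_of_continuous
    ((Complex.continuous_ofReal.comp (by fun_prop)).mul c3.continuous)
  have hC' : ∀ x, (1 + x ^ 2) * ‖deriv (deriv (deriv f)) x‖ ≤ C := fun x => by
    have := hC x
    rwa [norm_mul, Complex.norm_real, Real.norm_of_nonneg (by positivity)] at this
  set K := 2 * C * (∫ u, (|u| ^ 3 * (1 + u ^ 2)) ∂(ProbabilityTheory.gaussianReal 0 1)) with hK
  have hlim : Tendsto (fun t : ℝ => ‖√t * K‖ₑ * eLpNorm (fun x : ℝ => (1 + x ^ 2)⁻¹) 2 volume)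
      (𝓝[>] 0) (𝓝 0) := by
    have : Tendsto (fun t : ℝ => ‖√t * K‖ₑ) (𝓝[>] 0) (𝓝 0) := by
      have hc : Continuous (fun t : ℝ => ‖√t * K‖ₑ) := by fun_prop
      have := hc.tendsto 0
      simp only [Real.sqrt_zero, zero_mul, enorm_zero] at this
      exact this.mono_left nhdsWithin_le_nhds
    simpa using ENNReal.Tendsto.mul_const this (Or.inr gsg_memLp.2.ne)
  refine tendsto_of_tendsto_of_tendsto_of_le_of_le' tendsto_const_nhds hlim
    (Eventually.of_forall fun _ => zero_le) ?_
  filter_upwards [Ioc_mem_nhdsGT (zero_lt_one' ℝ)] with t ht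
  rw [← eLpNorm_const_smul]
  refine eLpNorm_mono_real fun x => ?_
  exact gsg_bound f _ _ _ h1 h2 h3 C B hC' hB t ht.1 ht.2 x
end

section
/- Let α ∈ (0,1), let d ∈ ℝ, let x < d, and let f : ℝ → ℂ be a Lipschitz function with f(t) = 0 for all t ≥ d. Then the integrals below converge absolutely and (1/Γ(−α))·∫₀^∞ (f(x + t) − f(x))·t^{−1−α} dt = (α/Γ(1−α))·∫_x^d (f(x) − f(t))·(t − x)^{−1−α} dt + f(x)·(d − x)^{−α}/Γ(1−α), where Γ(−α) = −Γ(1−α)/α. -/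
open MeasureTheory Real Set

/-- For `α ∈ (0,1)`, `x < d`, and a Lipschitz `f : ℝ → ℂ` vanishing on
`[d, ∞)`, the Balakrishnan integral equals the Marchaud‑type (Kipriyanov) fractional
derivative:
`(1/Γ(−α)) ∫₀^∞ (f(x+t) − f(x)) t^{−1−α} dt
  = (α/Γ(1−α)) ∫_x^d (f(x) − f(t))(t−x)^{−1−α} dt + f(x)(d−x)^{−α}/Γ(1−α)`,
both integrals converging absolutely, where `Γ(−α) = −Γ(1−α)/α`. -/
theorem balakrishnan_eq_marchaud
    (α : ℝ) (hα : α ∈ Ioo (0 : ℝ) 1) (d x : ℝ) (hxd : x < d)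
    (f : ℝ → ℂ) (K : NNReal) (hf : LipschitzWith K f)
    (hf0 : ∀ t : ℝ, d ≤ t → f t = 0) :
    Real.Gamma (-α) = -Real.Gamma (1 - α) / α ∧
    IntegrableOn (fun t : ℝ => (f (x + t) - f x) * ((t ^ (-1 - α) : ℝ) : ℂ))
      (Ioi (0 : ℝ)) volume ∧
    IntegrableOn (fun t : ℝ => (f x - f t) * (((t - x) ^ (-1 - α) : ℝ) : ℂ))
      (Ioo x d) volume ∧
    ((1 / Real.Gamma (-α) : ℝ) : ℂ) *
        ∫ t in Ioi (0 : ℝ), (f (x + t) - f x) * ((t ^ (-1 - α) : ℝ) : ℂ) =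
      ((α / Real.Gamma (1 - α) : ℝ) : ℂ) *
          (∫ t in Ioo x d, (f x - f t) * (((t - x) ^ (-1 - α) : ℝ) : ℂ)) +
        f x * ((((d - x) ^ (-α) : ℝ) / Real.Gamma (1 - α) : ℝ) : ℂ) := by
  obtain ⟨h0, h1⟩ := hα
  have hD : 0 < d - x := sub_pos.mpr hxd
  have hG : Real.Gamma (1 - α) ≠ 0 := (Real.Gamma_pos_of_pos (by linarith)).ne'
  have hΓ : Real.Gamma (-α) = -Real.Gamma (1 - α) / α := by
    have h := Real.Gamma_add_one (s := -α) (by linarith)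
    rw [show -α + 1 = 1 - α by ring] at h
    rw [h]; field_simp
  set g : ℝ → ℂ := fun t => (f (x + t) - f x) * ((t ^ (-1 - α) : ℝ) : ℂ) with hg
  have hmeas : Measurable g := by
    have hfm : Measurable f := hf.continuous.measurable
    have : Measurable (fun t : ℝ => t ^ (-1 - α)) := by fun_prop
    have h2 : Measurable (fun t : ℝ => ((t ^ (-1 - α) : ℝ) : ℂ)) :=
      Complex.measurable_ofReal.comp this
    exact ((hfm.comp (measurable_const.add measurable_id)).sub measurable_const).mul h2
  have hg1 : IntegrableOn g (Ioc 0 (d - x)) volume := by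
    have hb : IntegrableOn (fun t : ℝ => (K : ℝ) * t ^ (-α)) (Ioc 0 (d - x)) volume := by
      have := intervalIntegral.intervalIntegrable_rpow' (r := -α) (a := 0) (b := d - x)
        (by linarith)
      exact ((intervalIntegrable_iff_integrableOn_Ioc_of_le hD.le).1 this).const_mul _
    refine Integrable.mono' hb hmeas.aestronglyMeasurable ?_
    refine (ae_restrict_iff' measurableSet_Ioc).2 (Filter.Eventually.of_forall fun t ht => ?_)
    have hl := hf.dist_le_mul (x + t) x
    rw [dist_eq_norm, Real.dist_eq, add_sub_cancel_left, abs_of_pos ht.1] at hl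
    have hp : 0 ≤ t ^ (-1 - α) := Real.rpow_nonneg ht.1.le _
    have he : t * t ^ (-1 - α) = t ^ (-α) := by
      rw [show -α = 1 + (-1 - α) by ring, Real.rpow_add ht.1, Real.rpow_one]
    simp only [hg]
    rw [norm_mul, Complex.norm_real, Real.norm_of_nonneg hp, ← he, ← mul_assoc]
    exact mul_le_mul_of_nonneg_right hl hp
  have heq : EqOn g (fun t : ℝ => -f x * ((t ^ (-1 - α) : ℝ) : ℂ)) (Ioi (d - x)) := by
    intro t ht
    have ht' : d - x < t := ht
    simp only [hg]
    rw [hf0 (x + t) (by linarith), zero_sub]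
  have hr : IntegrableOn (fun t : ℝ => t ^ (-1 - α)) (Ioi (d - x)) volume :=
    integrableOn_Ioi_rpow_of_lt (by linarith) hD
  have hg2 : IntegrableOn g (Ioi (d - x)) volume := by
    refine IntegrableOn.congr_fun ?_ heq.symm measurableSet_Ioi
    exact (Integrable.ofReal (𝕜 := ℂ) hr).const_mul _
  have hi2 : ∫ t in Ioi (d - x), g t = -f x * (((d - x) ^ (-α) / α : ℝ) : ℂ) := by
    rw [setIntegral_congr_fun measurableSet_Ioi heq, integral_const_mul, integral_complex_ofReal,
      integral_Ioi_rpow_of_lt (by linarith) hD]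
    congr 2
    rw [show -1 - α + 1 = -α by ring, neg_div_neg_eq]
  have hshift : (fun t : ℝ => (f x - f t) * (((t - x) ^ (-1 - α) : ℝ) : ℂ))
      = fun t => -g (t - x) := by
    funext t
    simp only [hg]
    rw [add_sub_cancel]; ring
  have hgi : IntervalIntegrable g volume 0 (d - x) :=
    (intervalIntegrable_iff_integrableOn_Ioc_of_le hD.le).2 hg1
  have hIoi : Ioi (0 : ℝ) = Ioc 0 (d - x) ∪ Ioi (d - x) := (Ioc_union_Ioi_eq_Ioi hD.le).symm
  refine ⟨hΓ, ?_, ?_, ?_⟩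
  · rw [hIoi]; exact hg1.union hg2
  · rw [hshift]
    have := (hgi.comp_sub_right x).neg
    rw [zero_add, sub_add_cancel] at this
    exact ((intervalIntegrable_iff_integrableOn_Ioc_of_le hxd.le).1 this).mono_set Ioo_subset_Ioc_self
  · have hi3 : ∫ t in Ioo x d, (f x - f t) * (((t - x) ^ (-1 - α) : ℝ) : ℂ)
        = -∫ t in Ioc 0 (d - x), g t := by
      rw [hshift, ← integral_Ioc_eq_integral_Ioo, ← intervalIntegral.integral_of_le hxd.le,
        ← intervalIntegral.integral_of_le hD.le, intervalIntegral.integral_neg,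
        intervalIntegral.integral_comp_sub_right g x, sub_self]
    rw [hi3, hIoi, setIntegral_union (Ioc_disjoint_Ioi le_rfl) measurableSet_Ioi hg1 hg2, hi2, hΓ]
    have hGc : (Real.Gamma (1 - α) : ℂ) ≠ 0 := by exact_mod_cast hG
    have hαc : (α : ℂ) ≠ 0 := by exact_mod_cast h0.ne'
    push_cast
    field_simp
    ring
end
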